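/- Let H be a finite measure on the open interval (0,1) ⊂ ℝ, and let x > 0, y > 0. Let λ be the measure on (0,∞) with density r ↦ 2/r² with respect to Lebesgue measure, and let μ be the pushforward of the product measure λ ⊗ H on (0,∞) × (0,1) under the map T(r,ω) = (rω, r(1−ω)). Then μ({(s,t) ∈ ℝ² : s > x or t > y}) = 2·∫₀¹ max(ω/x, (1−ω)/y) dH(ω). -/

import Mathlib

open MeasureTheory

/-! Slice the region along the rays `ω = const`. For `ω ∈ (0,1)` put
`M ω = max (ω / x) ((1 - ω) / y) > 0`; the point `(r ω, r (1 - ω))` has a coordinate above its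
level exactly when `r > 1 / M ω`. The radial measure of this half-line is
`∫_{1/M}^∞ 2 / r² dr = 2 M ω` (`radial_Ioi`), and Tonelli's theorem integrates this against `H`.
On `(0,1)` the function `M` is bounded by `1 / x + 1 / y`, hence `H`-integrable, so the Lebesgue
integral agrees with the Bochner integral. -/

lemma radial_Ioi {c : ℝ} (hc : 0 < c) :
    ((volume.restrict (Set.Ioi (0 : ℝ))).withDensity (fun r => ENNReal.ofReal (2 / r ^ 2)))
      (Set.Ioi c) = ENNReal.ofReal (2 / c) := by
  rw [withDensity_apply _ measurableSet_Ioi, Measure.restrict_restrict measurableSet_Ioi,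
    Set.inter_eq_left.mpr (Set.Ioi_subset_Ioi hc.le)]
  have hpow : Set.EqOn (fun r : ℝ => 2 * r ^ (-2 : ℝ)) (fun r => 2 / r ^ 2) (Set.Ioi c) := by
    intro r hr
    have hr0 : 0 < r := hc.trans hr
    simp only [Real.rpow_neg hr0.le, Real.rpow_two, div_eq_mul_inv]
  have hint : IntegrableOn (fun r : ℝ => 2 / r ^ 2) (Set.Ioi c) :=
    IntegrableOn.congr_fun
      ((integrableOn_Ioi_rpow_of_lt (by norm_num : (-2 : ℝ) < -1) hc).const_mul 2) hpow
      measurableSet_Ioi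
  rw [← ofReal_integral_eq_lintegral_ofReal hint (ae_of_all _ fun r => by positivity),
    ← setIntegral_congr_fun measurableSet_Ioi hpow, integral_const_mul,
    integral_Ioi_rpow_of_lt (by norm_num) hc]
  congr 1
  rw [show (-2 : ℝ) + 1 = -1 by norm_num, Real.rpow_neg_one]
  ring

lemma slice_eq_Ioi {x y ω : ℝ} (hx : 0 < x) (hy : 0 < y) (hω : ω ∈ Set.Ioo (0 : ℝ) 1) :
    {r : ℝ | x < r * ω ∨ y < r * (1 - ω)} = Set.Ioi (1 / max (ω / x) ((1 - ω) / y)) := by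
  have h0 : 0 < ω := hω.1
  have h1 : 0 < 1 - ω := sub_pos.mpr hω.2
  have hM : 0 < max (ω / x) ((1 - ω) / y) := lt_max_of_lt_left (div_pos h0 hx)
  ext r
  rw [Set.mem_ofPred_eq, Set.mem_Ioi]
  constructor
  · intro h
    rw [div_lt_iff₀ hM]
    have hr : 0 < r := h.elim (fun h => pos_of_mul_pos_left (hx.trans h) h0.le)
      (fun h => pos_of_mul_pos_left (hy.trans h) h1.le)
    rw [mul_max_of_nonneg _ _ hr.le, lt_max_iff, mul_div, mul_div, one_lt_div hx, one_lt_div hy]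
    exact h
  · intro h
    have hr : 0 < r := (one_div_pos.mpr hM).trans h
    rwa [div_lt_iff₀ hM, mul_max_of_nonneg _ _ hr.le, lt_max_iff, mul_div, mul_div,
      one_lt_div hx, one_lt_div hy] at h

/-- **Exponent-measure identity.** Let `H` be a finite measure on `ℝ` concentrated on
`(0,1)`, `x > 0`, `y > 0`. Let `λ` be the measure on `(0,∞)` with density `r ↦ 2/r²`
with respect to Lebesgue measure, and let `μ` be the pushforward of `λ ⊗ H` under
`T(r,ω) = (rω, r(1−ω))`.  Then
`μ({(s,t) : s > x ∨ t > y}) = 2 · ∫₀¹ max(ω/x, (1−ω)/y) dH(ω)`. -/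
theorem exponent_measure_identity
    (H : Measure ℝ) [IsFiniteMeasure H] (hHsupp : H (Set.Ioo (0 : ℝ) 1)ᶜ = 0)
    (x y : ℝ) (hx : 0 < x) (hy : 0 < y) :
    (Measure.map (fun p : ℝ × ℝ => (p.1 * p.2, p.1 * (1 - p.2)))
        (((volume.restrict (Set.Ioi (0 : ℝ))).withDensity
            (fun r => ENNReal.ofReal (2 / r ^ 2))).prod H))
        {p : ℝ × ℝ | x < p.1 ∨ y < p.2}
      = ENNReal.ofReal
          (2 * ∫ ω in Set.Ioo (0 : ℝ) 1, max (ω / x) ((1 - ω) / y) ∂H) := by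
  have hT : Measurable fun p : ℝ × ℝ => (p.1 * p.2, p.1 * (1 - p.2)) := by fun_prop
  have hS : MeasurableSet {p : ℝ × ℝ | x < p.1 ∨ y < p.2} :=
    (measurableSet_lt measurable_const measurable_fst).union
      (measurableSet_lt measurable_const measurable_snd)
  have hH : H.restrict (Set.Ioo 0 1) = H := Measure.restrict_eq_self_of_ae_mem hHsupp
  have hmem : ∀ᵐ ω ∂H, ω ∈ Set.Ioo (0 : ℝ) 1 := hHsupp
  have hpos : ∀ ω ∈ Set.Ioo (0 : ℝ) 1, 0 < max (ω / x) ((1 - ω) / y) := fun ω hω =>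
    lt_max_of_lt_left (div_pos hω.1 hx)
  have hint : Integrable (fun ω => 2 * max (ω / x) ((1 - ω) / y)) H := by
    refine Integrable.const_mul (Integrable.of_bound (C := 1 / x + 1 / y)
      (by fun_prop) ?_) 2
    filter_upwards [hmem] with ω hω
    rw [Real.norm_of_nonneg (hpos ω hω).le]
    have hx' : 0 < 1 / x := by positivity
    have hy' : 0 < 1 / y := by positivity
    have h1 : ω / x ≤ 1 / x := by gcongr; exact hω.2.le
    have h2 : (1 - ω) / y ≤ 1 / y := by gcongr; linarith [hω.1]
    exact max_le (by linarith) (by linarith)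
  rw [hH, Measure.map_apply hT hS, Measure.prod_apply_symm (hT hS), ← integral_const_mul,
    ofReal_integral_eq_lintegral_ofReal hint
      (hmem.mono fun ω hω => mul_nonneg zero_le_two (hpos ω hω).le)]
  refine lintegral_congr_ae ?_
  filter_upwards [hmem] with ω hω
  have hslice := slice_eq_Ioi hx hy hω
  simp only [Set.preimage_ofPred_eq]
  rw [hslice, radial_Ioi (one_div_pos.mpr (hpos ω hω)), div_div_eq_mul_div, div_one]
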